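/- arXiv:2506.02319 — 2 statements merged into one kernel-verified Lean document; each statement's English description precedes it below -/
import Mathlib

section
/- Let G be a LERF group and let H ≤ G be a finitely generated subgroup with finite biindex in G, i.e., such that there are only finitely many double cosets H g H (g ∈ G). Then H has finite index in G. -/
open Pointwise

/-- A group is LERF if every finitely generated subgroup equals the intersection of all
finite-index subgroups containing it. -/
def IsLERF (G : Type*) [Group G] : Prop :=
  ∀ H : Subgroup G, H.FG → H = sInf {K : Subgroup G | H ≤ K ∧ K.FiniteIndex}

/-!
Every subgroup containing `H` is a union of double cosets `H g H`, so if there are only finitely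
many of these, there are only finitely many subgroups above `H`. When `H` is the intersection of
the finite-index subgroups containing it, that intersection is therefore finite, and a finite
intersection of finite-index subgroups has finite index.
-/

section

variable {G : Type*} [Group G] {H K L : Subgroup G}

/-- A subgroup is separable (closed in the profinite topology) if it is the intersection of the
finite-index subgroups containing it. Thus a group is LERF when all its finitely generated
subgroups are separable. -/
def IsSeparableSubgroup (H : Subgroup G) : Prop :=
  H = sInf {K : Subgroup G | H ≤ K ∧ K.FiniteIndex}

theorem finite_doubleCosetQuotient_iff {s t : Set G} :
    Finite (DoubleCoset.Quotient s t) ↔ {d : Set G | ∃ g : G, d = s * {g} * t}.Finite := by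
  have range_eq : Set.range (fun g : G => DoubleCoset.doubleCoset g s t) =
      {d : Set G | ∃ g : G, d = s * {g} * t} :=
    Set.ext fun _ => exists_congr fun _ => eq_comm
  rw [← range_eq, ← Set.finite_coe_iff]
  exact (Setoid.quotientKerEquivRange _).finite_iff

theorem preimage_image_doubleCoset_mk (hH : H ≤ L) (hK : K ≤ L) :
    DoubleCoset.mk H K ⁻¹' (DoubleCoset.mk H K '' L) = L := by
  refine (Set.subset_preimage_image _ _).antisymm' ?_
  rintro x ⟨g, hg, hgx⟩
  obtain ⟨h, hh, k, hk, rfl⟩ := (DoubleCoset.eq H K g x).mp hgx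
  exact L.mul_mem (L.mul_mem (hH hh) hg) (hK hk)

theorem finite_Ici_sup_of_finite_doubleCosetQuotient
    [Finite (DoubleCoset.Quotient (H : Set G) K)] : (Set.Ici (H ⊔ K)).Finite := by
  refine Set.Finite.of_injOn (f := fun L : Subgroup G => DoubleCoset.mk H K '' L)
    (Set.mapsTo_univ _ _) ?_ Set.finite_univ
  intro L₁ h₁ L₂ h₂ himage
  have ⟨hH₁, hK₁⟩ := sup_le_iff.mp (Set.mem_Ici.mp h₁)
  have ⟨hH₂, hK₂⟩ := sup_le_iff.mp (Set.mem_Ici.mp h₂)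
  apply SetLike.coe_injective
  calc (L₁ : Set G) = DoubleCoset.mk H K ⁻¹' (DoubleCoset.mk H K '' L₁) :=
        (preimage_image_doubleCoset_mk hH₁ hK₁).symm
    _ = DoubleCoset.mk H K ⁻¹' (DoubleCoset.mk H K '' L₂) := congrArg _ himage
    _ = L₂ := preimage_image_doubleCoset_mk hH₂ hK₂

theorem finiteIndex_sInf {S : Set (Subgroup G)} (hS : S.Finite)
    (hindex : ∀ K ∈ S, K.FiniteIndex) : (sInf S).FiniteIndex := by
  have := hS.to_subtype
  rw [sInf_eq_iInf']
  exact Subgroup.finiteIndex_iInf fun K => hindex K K.2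

theorem IsSeparableSubgroup.finiteIndex (hH : IsSeparableSubgroup H) (hfin : (Set.Ici H).Finite) :
    H.FiniteIndex := by
  rw [hH]
  exact finiteIndex_sInf (hfin.subset fun _ hK => hK.1) fun _ hK => hK.2

theorem finiteIndex_of_lerf_fg_finite_biindex_general (hH : IsSeparableSubgroup H)
    (hbi : {d : Set G | ∃ g : G, d = (H : Set G) * {g} * (H : Set G)}.Finite) :
    H.FiniteIndex := by
  have : Finite (DoubleCoset.Quotient (H : Set G) H) := finite_doubleCosetQuotient_iff.mpr hbi
  have hfin : (Set.Ici (H ⊔ H)).Finite := finite_Ici_sup_of_finite_doubleCosetQuotient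
  exact hH.finiteIndex (sup_idem H ▸ hfin)

end

/-- **Lemma (LERF and finite biindex).**
In a LERF group, a finitely generated subgroup of finite biindex (finitely many double
cosets `H g H`) has finite index. -/
theorem finiteIndex_of_lerf_fg_finite_biindex
    {G : Type*} [Group G] (hG : IsLERF G) (H : Subgroup G) (hfg : H.FG)
    (hbi : {d : Set G | ∃ g : G, d = (H : Set G) * {g} * (H : Set G)}.Finite) :
    H.FiniteIndex :=
  finiteIndex_of_lerf_fg_finite_biindex_general (hG H hfg) hbi
end

section
/- Every infinite group B generated by a finite subset T contains a bi-infinite geodesic through the identity: there exists x : ℤ → B with x(0) = 1 such that for all integers i ≤ j, the word length of x(i)⁻¹ · x(j) with respect to T equals j − i. -/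
open Pointwise

/-- The word length of `b` with respect to a generating set `T`: the least `m` such that
`b` is a product of `m` elements of `T ∪ T⁻¹`. -/
noncomputable def wordLength {B : Type*} [Group B] (T : Set B) (b : B) : ℕ :=
  sInf {m : ℕ | ∃ l : List B, l.length = m ∧ (∀ x ∈ l, x ∈ T ∪ T⁻¹) ∧ l.prod = b}

/-! A subword of a shortest word is again shortest, so the prefixes of a shortest word
trace out a geodesic segment. Balls are finite, hence an infinite group has arbitrarily long
geodesic segments; translate each of them so that its midpoint is the identity. The `i`-th vertex
of such a segment lies in a finite set that depends only on `i`, so Rado's selection lemma extracts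
a bi-infinite limit. -/

theorem mem_pow_iff_exists_list {M : Type*} [Monoid M] {S : Set M} {b : M} {n : ℕ} :
    b ∈ S ^ n ↔ ∃ l : List M, l.length = n ∧ (∀ x ∈ l, x ∈ S) ∧ l.prod = b := by
  rw [Set.mem_pow]
  constructor
  · rintro ⟨f, rfl⟩
    exact ⟨_, List.length_ofFn, by simp [List.mem_ofFn], rfl⟩
  · rintro ⟨l, rfl, hl, rfl⟩
    exact ⟨fun i ↦ ⟨l[i], hl _ (List.getElem_mem _)⟩, by simp⟩

theorem finite_pow {M : Type*} [Monoid M] {S : Set M} (hS : S.Finite) (n : ℕ) :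
    (S ^ n).Finite := by
  induction n with
  | zero => simp
  | succ n ih => exact pow_succ S n ▸ ih.mul hS

theorem exists_path_of_mem_pow {G : Type*} [Group G] {S : Set G} {b : G} {n : ℕ}
    (hb : b ∈ S ^ n) :
    ∃ x : ℕ → G, x 0 = 1 ∧ x n = b ∧
      ∀ i j, i ≤ j → j ≤ n → (x i)⁻¹ * x j ∈ S ^ (j - i) := by
  obtain ⟨l, rfl, hS, rfl⟩ := mem_pow_iff_exists_list.mp hb
  refine ⟨fun i ↦ (l.take i).prod, by simp, by simp, fun i j hij hj ↦ ?_⟩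
  have subword : (l.take i).prod⁻¹ * (l.take j).prod = ((l.take j).drop i).prod := by
    rw [inv_mul_eq_iff_eq_mul, ← List.prod_append]
    conv_lhs => rw [← List.take_append_drop i (l.take j), List.take_take, min_eq_left hij]
  rw [subword, mem_pow_iff_exists_list]
  exact ⟨_, by simp [hj], fun x hx ↦ hS x (List.mem_of_mem_take (List.mem_of_mem_drop hx)), rfl⟩

theorem exists_selection_of_finite {α β : Type*} {F : α → Set β} (hF : ∀ a, (F a).Finite)
    (y : Finset α → α → β) (hy : ∀ s, ∀ a ∈ s, y s a ∈ F a) :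
    ∃ x : α → β, ∀ s : Finset α, ∃ t, s ⊆ t ∧ ∀ a ∈ s, x a = y t a := by
  have : ∀ a, Finite (F a) := fun a ↦ (hF a).to_subtype
  obtain ⟨x, hx⟩ := Finset.rado_selection_subtype (β := fun a ↦ F a)
    fun s a ↦ ⟨y s a, hy s a a.2⟩
  refine ⟨fun a ↦ x a, fun s ↦ ?_⟩
  obtain ⟨t, hst, hxt⟩ := hx s
  exact ⟨t, hst, fun a ha ↦ congrArg Subtype.val (hxt ⟨a, ha⟩)⟩

section WordLength

variable {B : Type*} [Group B] {T : Set B} {b : B} {n : ℕ}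

theorem wordLength_eq_sInf_pow (T : Set B) (b : B) :
    wordLength T b = sInf {m : ℕ | b ∈ (T ∪ T⁻¹) ^ m} := by
  simp only [wordLength, mem_pow_iff_exists_list]

theorem wordLength_le_of_mem_pow (hb : b ∈ (T ∪ T⁻¹) ^ n) : wordLength T b ≤ n := by
  rw [wordLength_eq_sInf_pow]
  exact Nat.sInf_le hb

theorem mem_pow_wordLength_of_mem_pow (hb : b ∈ (T ∪ T⁻¹) ^ n) :
    b ∈ (T ∪ T⁻¹) ^ wordLength T b := by
  rw [wordLength_eq_sInf_pow]
  have hne : {m : ℕ | b ∈ (T ∪ T⁻¹) ^ m}.Nonempty := ⟨n, hb⟩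
  exact Nat.sInf_mem hne

-- Off the subgroup generated by `T` the infimum in `wordLength` is over `∅`, hence `0`: positive
-- length forces membership in that subgroup.
theorem mem_pow_wordLength_of_pos (hb : 0 < wordLength T b) :
    b ∈ (T ∪ T⁻¹) ^ wordLength T b := by
  rw [wordLength_eq_sInf_pow] at hb ⊢
  exact Nat.sInf_mem (Nat.nonempty_of_pos_sInf hb)

theorem mem_pow_wordLength_of_mem_closure (hb : b ∈ Subgroup.closure T) :
    b ∈ (T ∪ T⁻¹) ^ wordLength T b := by
  rw [← Subgroup.mem_toSubmonoid, Subgroup.closure_toSubmonoid] at hb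
  obtain ⟨l, hl, hprod⟩ := Submonoid.exists_list_of_mem_closure hb
  exact mem_pow_wordLength_of_mem_pow (mem_pow_iff_exists_list.mpr ⟨l, rfl, hl, hprod⟩)

theorem wordLength_eq_of_subword {u v w : B} {p q r : ℕ} (hu : u ∈ (T ∪ T⁻¹) ^ p)
    (hv : v ∈ (T ∪ T⁻¹) ^ q) (hw : w ∈ (T ∪ T⁻¹) ^ r)
    (huvw : p + q + r ≤ wordLength T (u * v * w)) : wordLength T v = q := by
  have shortened : u * v * w ∈ (T ∪ T⁻¹) ^ (p + wordLength T v + r) := by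
    rw [pow_add, pow_add]
    exact Set.mul_mem_mul (Set.mul_mem_mul hu (mem_pow_wordLength_of_mem_pow hv)) hw
  have h_le := wordLength_le_of_mem_pow hv
  have h_ge := huvw.trans (wordLength_le_of_mem_pow shortened)
  omega

theorem finite_setOf_wordLength_le (hT : T.Finite) (n : ℕ) :
    {b ∈ (Subgroup.closure T : Set B) | wordLength T b ≤ n}.Finite := by
  refine ((Set.finite_Iic n).biUnion fun m _ ↦ finite_pow (hT.union hT.inv) m).subset ?_
  rintro b ⟨hb, hbn⟩
  exact Set.mem_biUnion hbn (mem_pow_wordLength_of_mem_closure hb)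

theorem exists_lt_wordLength (hT : T.Finite) (hinf : (Subgroup.closure T : Set B).Infinite)
    (n : ℕ) : ∃ b ∈ Subgroup.closure T, n < wordLength T b := by
  obtain ⟨b, hb, hbn⟩ := (hinf.sdiff (finite_setOf_wordLength_le hT n)).nonempty
  exact ⟨b, hb, not_le.mp fun h ↦ hbn ⟨hb, h⟩⟩

end WordLength

section Geodesics

variable {B : Type*} [Group B] {T : Set B} {x : ℤ → B} {s : Set ℤ}

/-- The restriction of `x` to the set of times `s` is a geodesic for the word metric of `T`, where
`wordLength T (g⁻¹ * h)` is the distance from `g` to `h`. The values of `x` outside `s` are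
irrelevant; a bi-infinite geodesic is the case `s = Set.univ`. -/
def IsGeodesicOn (T : Set B) (x : ℤ → B) (s : Set ℤ) : Prop :=
  ∀ i ∈ s, ∀ j ∈ s, i ≤ j → (wordLength T ((x i)⁻¹ * x j) : ℤ) = j - i

namespace IsGeodesicOn

theorem mono {t : Set ℤ} (hx : IsGeodesicOn T x t) (hst : s ⊆ t) : IsGeodesicOn T x s :=
  fun i hi j hj ↦ hx i (hst hi) j (hst hj)

theorem translate (hx : IsGeodesicOn T x s) (g : B) (c : ℤ) :
    IsGeodesicOn T (fun i ↦ g * x (i + c)) ((· + c) ⁻¹' s) := by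
  intro i hi j hj hij
  have hlen := hx (i + c) hi (j + c) hj (by omega)
  rw [mul_inv_rev, mul_assoc, inv_mul_cancel_left, hlen]
  ring

theorem inv_mul_mem_pow (hx : IsGeodesicOn T x s) {i j : ℤ} (hi : i ∈ s) (hj : j ∈ s)
    (hij : i ≤ j) : (x i)⁻¹ * x j ∈ (T ∪ T⁻¹) ^ (j - i).natAbs := by
  have hlen := hx i hi j hj hij
  obtain rfl | hlt := hij.eq_or_lt
  · simp
  · rw [show (j - i).natAbs = wordLength T ((x i)⁻¹ * x j) by omega]
    exact mem_pow_wordLength_of_pos (by omega)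

theorem mem_pow_natAbs (hx : IsGeodesicOn T x s) (h0 : 0 ∈ s) (hx0 : x 0 = 1) {i : ℤ}
    (hi : i ∈ s) : x i ∈ (T ∪ T⁻¹) ^ i.natAbs := by
  rcases le_total 0 i with hnonneg | hnonpos
  · simpa [hx0] using hx.inv_mul_mem_pow h0 hi hnonneg
  · have hinv := Set.inv_mem_inv.mpr (hx.inv_mul_mem_pow hi h0 hnonpos)
    simpa [hx0, ← inv_pow, Set.union_comm] using hinv

end IsGeodesicOn

theorem exists_isGeodesicOn_Icc_wordLength {b : B} (hb : b ∈ Subgroup.closure T) :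
    ∃ x : ℤ → B, x 0 = 1 ∧ x (wordLength T b) = b ∧
      IsGeodesicOn T x (Set.Icc 0 (wordLength T b)) := by
  obtain ⟨x, hx0, hxb, hx⟩ := exists_path_of_mem_pow (mem_pow_wordLength_of_mem_closure hb)
  refine ⟨fun i ↦ x i.toNat, hx0, hxb, fun i ⟨hi, _⟩ j ⟨_, hj⟩ hij ↦ ?_⟩
  have hij' : i.toNat ≤ j.toNat := Int.toNat_le_toNat hij
  have hj' : j.toNat ≤ wordLength T b := Int.toNat_le.mpr hj
  have hprod : (x 0)⁻¹ * x i.toNat * ((x i.toNat)⁻¹ * x j.toNat) *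
      ((x j.toNat)⁻¹ * x (wordLength T b)) = b := by
    rw [hx0, hxb]
    group
  rw [wordLength_eq_of_subword (hx _ _ (Nat.zero_le _) (hij'.trans hj')) (hx _ _ hij' hj')
    (hx _ _ hj' le_rfl) (by rw [hprod]; omega)]
  omega

theorem exists_isGeodesicOn_Icc_neg (hT : T.Finite)
    (hinf : (Subgroup.closure T : Set B).Infinite) (n : ℕ) :
    ∃ x : ℤ → B, x 0 = 1 ∧ IsGeodesicOn T x (Set.Icc (-n) n) := by
  obtain ⟨b, hb, hlong⟩ := exists_lt_wordLength hT hinf (2 * n)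
  obtain ⟨x, -, -, hx⟩ := exists_isGeodesicOn_Icc_wordLength hb
  refine ⟨fun i ↦ (x n)⁻¹ * x (i + n), by simp, (hx.translate (x n)⁻¹ n).mono ?_⟩
  rintro i ⟨hi, hi'⟩
  rw [Set.mem_preimage, Set.mem_Icc]
  omega

theorem exists_isGeodesicOn_finset (hT : T.Finite)
    (hinf : (Subgroup.closure T : Set B).Infinite) (s : Finset ℤ) :
    ∃ x : ℤ → B, x 0 = 1 ∧ IsGeodesicOn T x s := by
  obtain ⟨x, hx0, hx⟩ := exists_isGeodesicOn_Icc_neg hT hinf (s.sup Int.natAbs)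
  refine ⟨x, hx0, hx.mono fun i hi ↦ ?_⟩
  have hi_le : i.natAbs ≤ s.sup Int.natAbs := Finset.le_sup hi
  rw [Set.mem_Icc]
  omega

theorem exists_isGeodesicOn_univ (hT : T.Finite)
    (h : ∀ s : Finset ℤ, ∃ x : ℤ → B, x 0 = 1 ∧ IsGeodesicOn T x s) :
    ∃ x : ℤ → B, x 0 = 1 ∧ IsGeodesicOn T x Set.univ := by
  choose y hy0 hy using h
  obtain ⟨x, hx⟩ := exists_selection_of_finite
    (fun i : ℤ ↦ finite_pow (hT.union hT.inv) i.natAbs) (fun s ↦ y (insert 0 s))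
    fun s i hi ↦ (hy _).mem_pow_natAbs (by simp) (hy0 _) (by simp [hi])
  refine ⟨x, ?_, fun i _ j _ hij ↦ ?_⟩
  · obtain ⟨t, -, hxt⟩ := hx {0}
    rw [hxt 0 (by simp), hy0]
  · obtain ⟨t, hst, hxt⟩ := hx {i, j}
    rw [hxt i (by simp), hxt j (by simp)]
    exact hy _ i (by simp [hst (Finset.mem_insert_self i {j})]) j
      (by simp [hst (show j ∈ {i, j} by simp)]) hij

end Geodesics

theorem exists_biinfinite_geodesic_general {B : Type*} [Group B] {T : Set B} (hT : T.Finite)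
    (hinf : (Subgroup.closure T : Set B).Infinite) :
    ∃ x : ℤ → B, x 0 = 1 ∧
      ∀ i j : ℤ, i ≤ j → (wordLength T ((x i)⁻¹ * x j) : ℤ) = j - i := by
  obtain ⟨x, hx0, hx⟩ := exists_isGeodesicOn_univ hT (exists_isGeodesicOn_finset hT hinf)
  exact ⟨x, hx0, fun i j ↦ hx i trivial j trivial⟩

/-- **Lemma (bi-infinite geodesics).**
Every infinite group `B` with a finite generating set `T` contains a bi-infinite geodesic
through the identity: a sequence `x : ℤ → B` with `x 0 = 1` such that the word length of
`(x i)⁻¹ * x j` equals `j - i` for all `i ≤ j`. -/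
theorem exists_biinfinite_geodesic
    {B : Type*} [Group B] [Infinite B] (T : Finset B)
    (hT : Subgroup.closure (T : Set B) = ⊤) :
    ∃ x : ℤ → B, x 0 = 1 ∧
      ∀ i j : ℤ, i ≤ j → (wordLength (T : Set B) ((x i)⁻¹ * x j) : ℤ) = j - i := by
  exact exists_biinfinite_geodesic_general T.finite_toSet (by simpa [hT] using Set.infinite_univ)
end
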